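/- arXiv:math/0405244 — 3 statements merged into one kernel-verified Lean document; each statement's English description precedes it below -/
import Mathlib

section
/- Let f : L × L → ℂ (with f extended H-periodically in its first variable, so that f(x−y, y) means f evaluated at the representative in L of x−y modulo H) and let g : L → ℂ. Then for every p ∈ L: Σ_{x∈L} ε·exp(−2πi p x)·( Σ_{y∈L} ε·f(x−y, y)·g(y) ) = (Φ_p ∗ (Fg))(p), where Φ_p : L → ℂ is defined by Φ_p(r) = Σ_{y∈L} ε·exp(−2πi r y)·( Σ_{u∈L} ε·exp(−2πi p u)·f(u, y) ). -/
open Complex Finset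

noncomputable section

/-- Balanced representative of `z : ZMod n` in `[-n/2, n/2)`. -/
def bval (n : ℕ) (z : ZMod n) : ℤ :=
  if 2 * (z.val : ℤ) < (n : ℤ) then (z.val : ℤ) else (z.val : ℤ) - (n : ℤ)

/-- The real lattice point `ε·z ∈ [-H/2, H/2)` of `L` corresponding to `x : ZMod (H^2)`;
subtraction in `ZMod (H^2)` realizes reduction modulo `H` on `L`. -/
def Lpt (H : ℕ) (x : ZMod (H ^ 2)) : ℝ := (bval (H ^ 2) x : ℝ) / H

/-- The infinitesimal Fourier transformation `(Fφ)(p) = Σ_{x∈L} ε·exp(-2πipx)·φ(x)`. -/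
def Ftr (H : ℕ) [NeZero H] (φ : ZMod (H ^ 2) → ℂ) (p : ZMod (H ^ 2)) : ℂ :=
  ∑ x : ZMod (H ^ 2),
    (1 / (H : ℂ)) * Complex.exp (-2 * (Real.pi : ℂ) * I * (Lpt H p : ℂ) * (Lpt H x : ℂ)) * φ x

/-- The convolution `(φ∗ψ)(p) = Σ_{q∈L} ε·φ(p-q)·ψ(q)`. -/
def conv (H : ℕ) [NeZero H] (φ ψ : ZMod (H ^ 2) → ℂ) (p : ZMod (H ^ 2)) : ℂ :=
  ∑ q : ZMod (H ^ 2), (1 / (H : ℂ)) * φ (p - q) * ψ q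

lemma bval_cast (n : ℕ) [NeZero n] (z : ZMod n) : ((bval n z : ℤ) : ZMod n) = z := by
  unfold bval
  split_ifs <;> simp

lemma exp_eq_char (H : ℕ) [NeZero H] (a b : ZMod (H ^ 2)) :
    Complex.exp (-2 * (Real.pi : ℂ) * I * (Lpt H a : ℂ) * (Lpt H b : ℂ)) =
      ZMod.stdAddChar (-(a * b)) := by
  have h : (-(a * b)) = ((-(bval (H ^ 2) a * bval (H ^ 2) b) : ℤ) : ZMod (H ^ 2)) := by
    push_cast
    rw [bval_cast, bval_cast]
  have hH : (H : ℂ) ≠ 0 := Nat.cast_ne_zero.mpr (NeZero.ne H)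
  rw [h, ZMod.stdAddChar_coe]
  congr 1
  unfold Lpt
  push_cast
  field_simp

lemma char_sum (H : ℕ) [NeZero H] (y z : ZMod (H ^ 2)) :
    (∑ q : ZMod (H ^ 2), (ZMod.stdAddChar (q * (y - z)) : ℂ)) =
      if y = z then (H : ℂ) ^ 2 else 0 := by
  rw [AddChar.sum_mulShift _ (ZMod.isPrimitive_stdAddChar _)]
  simp [sub_eq_zero, ZMod.card]

/-- for `f : L × L → ℂ` (extended `H`-periodically in the first variable)
and `g : L → ℂ`, the Fourier transform in `x` of `Σ_y ε·f(x-y,y)·g(y)` at `p` equals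
`(Φ_p ∗ (Fg))(p)` where `Φ_p(r) = Σ_y ε·exp(-2πiry)·(Σ_u ε·exp(-2πipu)·f(u,y))`. -/
theorem stmt0 (H : ℕ) [NeZero H] (hH : Even H)
    (f : ZMod (H ^ 2) → ZMod (H ^ 2) → ℂ) (g : ZMod (H ^ 2) → ℂ)
    (p : ZMod (H ^ 2)) :
    (∑ x : ZMod (H ^ 2),
        (1 / (H : ℂ)) * Complex.exp (-2 * (Real.pi : ℂ) * I * (Lpt H p : ℂ) * (Lpt H x : ℂ)) *
          (∑ y : ZMod (H ^ 2), (1 / (H : ℂ)) * f (x - y) y * g y)) =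
      conv H
        (fun r => ∑ y : ZMod (H ^ 2),
          (1 / (H : ℂ)) * Complex.exp (-2 * (Real.pi : ℂ) * I * (Lpt H r : ℂ) * (Lpt H y : ℂ)) *
            (∑ u : ZMod (H ^ 2),
              (1 / (H : ℂ)) * Complex.exp (-2 * (Real.pi : ℂ) * I * (Lpt H p : ℂ) * (Lpt H u : ℂ)) *
                f u y))
        (Ftr H g) p := by
  have hH0 : (H : ℂ) ≠ 0 := Nat.cast_ne_zero.mpr (NeZero.ne H)
  unfold conv Ftr
  simp only [exp_eq_char]
  set A : ZMod (H ^ 2) → ℂ := fun y => ∑ u : ZMod (H ^ 2),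
    (1 / (H : ℂ)) * ZMod.stdAddChar (-(p * u)) * f u y with hA
  have hL : (∑ x : ZMod (H ^ 2), (1 / (H : ℂ)) * (ZMod.stdAddChar (-(p * x)) : ℂ) *
      (∑ y : ZMod (H ^ 2), (1 / (H : ℂ)) * f (x - y) y * g y)) =
      ∑ y, (1 / (H : ℂ)) * ZMod.stdAddChar (-(p * y)) * A y * g y := by
    simp only [Finset.mul_sum]
    rw [Finset.sum_comm]
    refine Finset.sum_congr rfl fun y _ => ?_
    rw [← Equiv.sum_comp (Equiv.addRight y), hA]
    simp only [Finset.mul_sum, Finset.sum_mul, Equiv.coe_addRight, add_sub_cancel_right]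
    refine Finset.sum_congr rfl fun u _ => ?_
    rw [show -(p * (u + y)) = -(p * u) + -(p * y) by ring, AddChar.map_add_eq_mul]
    ring
  have hR : (∑ q : ZMod (H ^ 2), (1 / (H : ℂ)) *
      (∑ y, (1 / (H : ℂ)) * (ZMod.stdAddChar (-((p - q) * y)) : ℂ) * A y) *
      (∑ z, (1 / (H : ℂ)) * (ZMod.stdAddChar (-(q * z)) : ℂ) * g z)) =
      ∑ y, ∑ z, (1 / (H : ℂ)) ^ 3 * ZMod.stdAddChar (-(p * y)) * A y * g z *
        ∑ q : ZMod (H ^ 2), (ZMod.stdAddChar (q * (y - z)) : ℂ) := by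
    clear hL
    clear_value A
    calc _ = ∑ q : ZMod (H ^ 2), ∑ y, ∑ z, (1 / (H : ℂ)) ^ 3 * ZMod.stdAddChar (-(p * y)) *
          A y * g z * (ZMod.stdAddChar (q * (y - z)) : ℂ) := by
          refine Finset.sum_congr rfl fun q _ => ?_
          rw [mul_assoc, Finset.sum_mul_sum, Finset.mul_sum]
          refine Finset.sum_congr rfl fun y _ => ?_
          rw [Finset.mul_sum]
          refine Finset.sum_congr rfl fun z _ => ?_
          rw [show -((p - q) * y) = -(p * y) + q * y by ring,
            show q * (y - z) = q * y + -(q * z) by ring, AddChar.map_add_eq_mul,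
            AddChar.map_add_eq_mul]
          ring
      _ = _ := by
          rw [Finset.sum_comm]
          refine Finset.sum_congr rfl fun y _ => ?_
          rw [Finset.sum_comm]
          refine Finset.sum_congr rfl fun z _ => ?_
          rw [Finset.mul_sum]
  rw [hL]
  refine Eq.trans ?_ hR.symm
  refine Finset.sum_congr rfl fun y _ => ?_
  simp only [char_sum, mul_ite, mul_zero, Finset.sum_ite_eq, Finset.mem_univ, if_true]
  field_simp
end
end

section
/- Let φ₁ : L → ℂ be φ₁(x) = exp(iπx²). Then exp(iπx²) is H-periodic on εℤ (exp(iπ(x+H)²) = exp(iπx²) for all x ∈ εℤ), and for every p ∈ L: (Fφ₁)(p) = exp(iπ/4)·conj(φ₁(p)), i.e. Σ_{x∈L} ε·exp(iπx²)·exp(−2πi p x) = exp(iπ/4)·exp(−iπp²). -/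
open Complex Finset

noncomputable section

lemma exp_eq_of_sub (x y : ℂ) (n : ℤ) (h : x = y + n * (2 * (Real.pi : ℂ) * I)) :
    Complex.exp x = Complex.exp y := by
  rw [h, Complex.exp_add, Complex.exp_int_mul_two_pi_mul_I, mul_one]

lemma per_aux (H : ℕ) [NeZero H] (hH : Even H) (z k : ℤ) :
    Complex.exp ((Real.pi : ℂ) * I * (((z + k * (H : ℤ) ^ 2 : ℤ) : ℂ) / (H : ℂ)) ^ 2) =
      Complex.exp ((Real.pi : ℂ) * I * ((z : ℂ) / (H : ℂ)) ^ 2) := by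
  have hne : (H : ℂ) ≠ 0 := Nat.cast_ne_zero.mpr (NeZero.ne H)
  obtain ⟨m, rfl⟩ := hH
  refine exp_eq_of_sub _ _ (z * k + 2 * k ^ 2 * m ^ 2) ?_
  push_cast at hne ⊢
  have hm : (m : ℂ) ≠ 0 := by
    intro h
    simp [h] at hne
  field_simp
  ring

/-- The Gaussian as a function on residues. -/
def gfun (H : ℕ) (x : ZMod (H ^ 2)) : ℂ :=
  Complex.exp ((Real.pi : ℂ) * I * (((x.val : ℤ) : ℂ) / (H : ℂ)) ^ 2)

lemma gfun_cast (H : ℕ) [NeZero H] (hH : Even H) (z : ℤ) :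
    gfun H (z : ZMod (H ^ 2)) = Complex.exp ((Real.pi : ℂ) * I * ((z : ℂ) / (H : ℂ)) ^ 2) := by
  unfold gfun
  rw [ZMod.val_intCast]
  rw [← per_aux H hH (z % ((H ^ 2 : ℕ) : ℤ)) (z / ((H ^ 2 : ℕ) : ℤ))]
  have h : z % ((H ^ 2 : ℕ) : ℤ) + z / ((H ^ 2 : ℕ) : ℤ) * (H : ℤ) ^ 2 = z := by
    have := Int.emod_add_mul_ediv z ((H ^ 2 : ℕ) : ℤ)
    push_cast at this ⊢
    linarith
  rw [h]

lemma gauss_inner_sum (H : ℕ) [NeZero H] (hH : Even H) (a : ℕ) (ha : a < H) :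
    ∑ b ∈ range H, Complex.exp ((Real.pi : ℂ) * I * (((a + H * b : ℕ) : ℂ) / (H : ℂ)) ^ 2) =
      if a = H / 2 then (H : ℂ) * Complex.exp ((Real.pi : ℂ) * I / 4) else 0 := by
  have hne : (H : ℂ) ≠ 0 := Nat.cast_ne_zero.mpr (NeZero.ne H)
  have key : ∀ b : ℕ, Complex.exp ((Real.pi : ℂ) * I * (((a + H * b : ℕ) : ℂ) / (H : ℂ)) ^ 2) =
      Complex.exp ((Real.pi : ℂ) * I * ((a : ℂ) / H) ^ 2) *
        Complex.exp (2 * (Real.pi : ℂ) * I * ((a : ℂ) / H + 1 / 2)) ^ b := by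
    intro b
    rw [← Complex.exp_nat_mul, ← Complex.exp_add]
    obtain ⟨c, hc⟩ : Even ((b : ℤ) * ((b : ℤ) - 1)) := Int.even_mul_pred_self _
    have hc' : (b : ℂ) * (b - 1) = c + c := by exact_mod_cast hc
    refine exp_eq_of_sub _ _ c ?_
    have hb : (b : ℂ) ^ 2 = b + 2 * c := by linear_combination hc'
    have h1 : ((a + H * b : ℕ) : ℂ) / (H : ℂ) = a / H + b := by
      push_cast
      field_simp
    rw [h1]
    linear_combination (Real.pi : ℂ) * I * hb
  rw [Finset.sum_congr rfl (fun b _ => key b), ← Finset.mul_sum]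
  have hpi : (2 * (Real.pi : ℂ) * I) ≠ 0 := Complex.two_pi_I_ne_zero
  obtain ⟨m, hm⟩ := hH
  have hmC : (H : ℂ) = m + m := by exact_mod_cast hm
  split_ifs with h
  · have ham : a = m := by omega
    have hmd : (a : ℂ) / H = 1 / 2 := by
      rw [ham, div_eq_iff hne, hmC]
      ring
    have h1 : Complex.exp (2 * (Real.pi : ℂ) * I * ((a : ℂ) / H + 1 / 2)) = 1 := by
      rw [hmd, add_halves, mul_one, Complex.exp_two_pi_mul_I]
    rw [h1, hmd]
    simp only [one_pow, sum_const, card_range, nsmul_eq_mul, mul_one]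
    rw [mul_comm]
    congr 2
    ring
  · have h1 : Complex.exp (2 * (Real.pi : ℂ) * I * ((a : ℂ) / H + 1 / 2)) ≠ 1 := by
      intro h1
      obtain ⟨n, hn⟩ := Complex.exp_eq_one_iff.mp h1
      have h2 : (a : ℂ) / H + 1 / 2 = n := by
        apply mul_left_cancel₀ hpi
        rw [hn]
        ring
      have h3 : (a : ℂ) + m = n * H := by
        field_simp at h2
        linear_combination h2 / 2 - hmC / 2
      have h4 : (a : ℤ) + m = n * H := by exact_mod_cast h3
      have hn1 : n = 1 := by
        have hHp : (0 : ℤ) < H := by exact_mod_cast NeZero.pos H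
        have l1 : 0 < n := by
          by_contra hcon
          nlinarith
        have l2 : n < 2 := by
          by_contra hcon
          nlinarith
        omega
      subst hn1
      omega
    have h2 : Complex.exp (2 * (Real.pi : ℂ) * I * ((a : ℂ) / H + 1 / 2)) ^ H = 1 := by
      rw [← Complex.exp_nat_mul]
      rw [Complex.exp_eq_one_iff]
      refine ⟨a + m, ?_⟩
      push_cast
      field_simp
      linear_combination hmC
    rw [geom_sum_eq h1, h2]
    simp

lemma gauss_total (H : ℕ) [NeZero H] (hH : Even H) :
    ∑ x : ZMod (H ^ 2), gfun H x = (H : ℂ) * Complex.exp ((Real.pi : ℂ) * I / 4) := by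
  have hpos : 0 < H := NeZero.pos H
  have e1 : ∑ x : ZMod (H ^ 2), gfun H x =
      ∑ n ∈ range (H ^ 2), Complex.exp ((Real.pi : ℂ) * I * ((n : ℂ) / (H : ℂ)) ^ 2) := by
    refine Finset.sum_bij (fun x _ => x.val) ?_ ?_ ?_ ?_
    · intro x _
      exact Finset.mem_range.mpr (ZMod.val_lt x)
    · intro x _ y _ h
      exact ZMod.val_injective _ h
    · intro n hn
      exact ⟨(n : ZMod (H ^ 2)), Finset.mem_univ _, ZMod.val_cast_of_lt (Finset.mem_range.mp hn)⟩
    · intro x _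
      simp [gfun]
  rw [e1, sq, Finset.sum_range, ← finProdFinEquiv.sum_comp, Fintype.sum_prod_type_right]
  simp only [finProdFinEquiv_apply_val]
  have e2 : ∀ a : Fin H, ∑ b : Fin H,
      Complex.exp ((Real.pi : ℂ) * I * (((a.val + H * b.val : ℕ) : ℂ) / (H : ℂ)) ^ 2) =
      if a.val = H / 2 then (H : ℂ) * Complex.exp ((Real.pi : ℂ) * I / 4) else 0 := by
    intro a
    rw [← gauss_inner_sum H hH a.val a.isLt, Finset.sum_range]
  rw [Finset.sum_congr rfl (fun a _ => e2 a)]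
  rw [← Finset.sum_range (fun a => if a = H / 2 then
    (H : ℂ) * Complex.exp ((Real.pi : ℂ) * I / 4) else 0)]
  rw [Finset.sum_ite_eq' , if_pos (Finset.mem_range.mpr (Nat.div_lt_self hpos one_lt_two))]

lemma main_aux (H : ℕ) [NeZero H] (hH : Even H) (p : ZMod (H ^ 2)) :
      Ftr H (fun x => Complex.exp ((Real.pi : ℂ) * I * ((Lpt H x : ℝ) : ℂ) ^ 2)) p =
          Complex.exp ((Real.pi : ℂ) * I / 4) *
            Complex.exp (-(Real.pi : ℂ) * I * ((Lpt H p : ℝ) : ℂ) ^ 2) := by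
  have hne : (H : ℂ) ≠ 0 := Nat.cast_ne_zero.mpr (NeZero.ne H)
  unfold Ftr
  have key : ∀ x : ZMod (H ^ 2), (1 / (H : ℂ)) *
      Complex.exp (-2 * (Real.pi : ℂ) * I * (Lpt H p : ℂ) * (Lpt H x : ℂ)) *
      Complex.exp ((Real.pi : ℂ) * I * ((Lpt H x : ℝ) : ℂ) ^ 2) =
      (1 / (H : ℂ)) * Complex.exp (-(Real.pi : ℂ) * I * ((Lpt H p : ℝ) : ℂ) ^ 2) *
        gfun H (x - p) := by
    intro x
    have hx : x - p = ((bval (H ^ 2) x - bval (H ^ 2) p : ℤ) : ZMod (H ^ 2)) := by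
      push_cast
      rw [bval_cast, bval_cast]
    rw [hx, gfun_cast H hH, mul_assoc (1 / (H : ℂ)), mul_assoc (1 / (H : ℂ)), ← Complex.exp_add, ← Complex.exp_add]
    congr 2
    unfold Lpt
    push_cast
    ring
  rw [Finset.sum_congr rfl (fun x _ => key x), ← Finset.mul_sum]
  have hs : ∑ x : ZMod (H ^ 2), gfun H (x - p) = ∑ x : ZMod (H ^ 2), gfun H x :=
    (Equiv.subRight p).sum_comp (gfun H)
  rw [hs, gauss_total H hH]
  field_simp

/-- `exp(iπx²)` is `H`-periodic on `εℤ`, and the infinitesimal Fourier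
transformation of `φ₁(x) = exp(iπx²)` satisfies `(Fφ₁)(p) = exp(iπ/4)·conj(φ₁(p))
= exp(iπ/4)·exp(−iπp²)`. -/
theorem stmt15 (H : ℕ) [NeZero H] (hH : Even H) :
    (∀ z : ℤ, Complex.exp ((Real.pi : ℂ) * I * ((z : ℂ) / (H : ℂ) + (H : ℂ)) ^ 2) =
        Complex.exp ((Real.pi : ℂ) * I * ((z : ℂ) / (H : ℂ)) ^ 2)) ∧
    ∀ p : ZMod (H ^ 2),
      Ftr H (fun x => Complex.exp ((Real.pi : ℂ) * I * ((Lpt H x : ℝ) : ℂ) ^ 2)) p =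
          Complex.exp ((Real.pi : ℂ) * I / 4) *
            (starRingEnd ℂ) (Complex.exp ((Real.pi : ℂ) * I * ((Lpt H p : ℝ) : ℂ) ^ 2)) ∧
      Ftr H (fun x => Complex.exp ((Real.pi : ℂ) * I * ((Lpt H x : ℝ) : ℂ) ^ 2)) p =
          Complex.exp ((Real.pi : ℂ) * I / 4) *
            Complex.exp (-(Real.pi : ℂ) * I * ((Lpt H p : ℝ) : ℂ) ^ 2) := by
  have hne : (H : ℂ) ≠ 0 := Nat.cast_ne_zero.mpr (NeZero.ne H)
  refine ⟨?_, ?_⟩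
  · intro z
    rw [← per_aux H hH z 1]
    congr 3
    push_cast
    field_simp
  · intro p
    refine ⟨?_, main_aux H hH p⟩
    rw [main_aux H hH p, ← Complex.exp_conj]
    congr 2
    simp
end
end

section
/- Let φ₂ : L → ℂ be φ₂(x) = exp(−πx²). Then for every p ∈ L: (Fφ₂)(p) = c(p)·exp(−πp²), where c(p) = Σ_{x∈L} ε·exp(−π(x + ip)²). -/
open Complex Finset

noncomputable section

/-- the infinitesimal Fourier transformation of `φ₂(x) = exp(−πx²)`
satisfies `(Fφ₂)(p) = c(p)·exp(−πp²)` with `c(p) = Σ_{x∈L} ε·exp(−π(x+ip)²)`. -/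
theorem stmt16 (H : ℕ) [NeZero H] (hH : Even H) (p : ZMod (H ^ 2)) :
    Ftr H (fun x => Complex.exp (-(Real.pi : ℂ) * ((Lpt H x : ℝ) : ℂ) ^ 2)) p =
      (∑ x : ZMod (H ^ 2),
          (1 / (H : ℂ)) *
            Complex.exp (-(Real.pi : ℂ) * (((Lpt H x : ℝ) : ℂ) + I * ((Lpt H p : ℝ) : ℂ)) ^ 2)) *
        Complex.exp (-(Real.pi : ℂ) * ((Lpt H p : ℝ) : ℂ) ^ 2) := by
  unfold Ftr
  rw [Finset.sum_mul]
  refine Finset.sum_congr rfl fun x _ => ?_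
  rw [mul_assoc (1 / (H : ℂ)), mul_assoc (1 / (H : ℂ)), ← Complex.exp_add, ← Complex.exp_add]
  congr 2
  linear_combination ((Real.pi : ℂ) * ((Lpt H p : ℝ) : ℂ) ^ 2) * Complex.I_sq
end
end
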